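/- If G ⊆ R^m is a signature Gröbner basis, then ‾G = {‾g : g ∈ G} is a Gröbner basis of the ideal ⟨f_1,…,f_m⟩ of R generated by f_1,…,f_m. -/

import Mathlib

namespace SigGB

noncomputable section

/-- Power-products in `n` indeterminates, written additively as exponent vectors
(so the power-product `1` is `0`, and multiplication of power-products is `+`). -/
abbrev PP (n : ℕ) : Type := Fin n →₀ ℕ

/-- Terms: a power-product together with a component index (`t·e_i ↝ (t, i)`). -/
abbrev Term (n m : ℕ) : Type := PP n × Fin m

/-- Multiplication of a term by a power-product: `t ⊗ (s·e_i) = (t·s)·e_i`. -/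
def mulTerm {n m : ℕ} (t : PP n) (u : Term n m) : Term n m := (t + u.1, u.2)

/-- Divisibility of terms: `u ∣ v` iff `v = t ⊗ u` for some power-product `t`. -/
def termDvd {n m : ℕ} (u v : Term n m) : Prop := ∃ t : PP n, v = mulTerm t u

/-- Componentwise lcm of power-products. -/
noncomputable def lcmPP {n : ℕ} (s t : PP n) : PP n := Finsupp.zipWith max (max_self 0) s t

/-- Strict part of a relation. -/
def strict {α : Type*} (r : α → α → Prop) (x y : α) : Prop := r x y ∧ x ≠ y

/-- `ple` is an admissible order on power-products and `tle` is a compatible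
linear order on terms. -/
structure OrdersOK {n m : ℕ} (ple : PP n → PP n → Prop)
    (tle : Term n m → Term n m → Prop) : Prop where
  ple_refl : ∀ t, ple t t
  ple_trans : ∀ s t u, ple s t → ple t u → ple s u
  ple_antisymm : ∀ s t, ple s t → ple t s → s = t
  ple_total : ∀ s t, ple s t ∨ ple t s
  ple_one_le : ∀ t, ple 0 t
  ple_mul : ∀ (t s₁ s₂ : PP n), ple s₁ s₂ → ple (t + s₁) (t + s₂)
  tle_refl : ∀ u, tle u u
  tle_trans : ∀ u v w, tle u v → tle v w → tle u w
  tle_antisymm : ∀ u v, tle u v → tle v u → u = v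
  tle_total : ∀ u v, tle u v ∨ tle v u
  tle_mul : ∀ (t : PP n) (u v : Term n m), tle u v → tle (mulTerm t u) (mulTerm t v)
  tle_compat : ∀ (s t : PP n) (i j : Fin m), ple s t → i ≤ j → tle (s, i) (t, j)

variable {K : Type*} [Field K] {n m : ℕ} [NeZero m]

variable (f : Fin m → MvPolynomial (Fin n) K)
variable (ple : PP n → PP n → Prop)
variable (tle : Term n m → Term n m → Prop)

/-- The module homomorphism `R^m → R` determined by `e_i ↦ f i`, i.e. `a ↦ ‾a`. -/
def bar (a : Fin m → MvPolynomial (Fin n) K) : MvPolynomial (Fin n) K := ∑ i, a i * f i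

/-- Multiplication of a module element by a coefficient `c` and a power-product `t`. -/
noncomputable def monomMul (c : K) (t : PP n) (a : Fin m → MvPolynomial (Fin n) K) :
    Fin m → MvPolynomial (Fin n) K :=
  fun i => MvPolynomial.monomial t c * a i

/-- The coefficient of a term in a module element. -/
def coeffM (a : Fin m → MvPolynomial (Fin n) K) (u : Term n m) : K :=
  MvPolynomial.coeff u.1 (a u.2)

open Classical in
/-- Leading power-product of a polynomial w.r.t. `ple`
(junk value `0`, i.e. the power-product `1`, for the zero polynomial). -/
noncomputable def lp (p : MvPolynomial (Fin n) K) : PP n :=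
  if h : ∃ t, MvPolynomial.coeff t p ≠ 0 ∧ ∀ s, MvPolynomial.coeff s p ≠ 0 → ple s t
  then h.choose else 0

/-- Leading coefficient of a polynomial w.r.t. `ple`. -/
noncomputable def lc (p : MvPolynomial (Fin n) K) : K := MvPolynomial.coeff (lp ple p) p

open Classical in
/-- Signature of a module element: its `tle`-largest term with nonzero coefficient
(junk value for `0`). -/
noncomputable def sig (a : Fin m → MvPolynomial (Fin n) K) : Term n m :=
  if h : ∃ u, coeffM a u ≠ 0 ∧ ∀ v, coeffM a v ≠ 0 → tle v u
  then h.choose else ((0 : PP n), (0 : Fin m))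

/-- Leading coefficient of a module element. -/
noncomputable def lcM (a : Fin m → MvPolynomial (Fin n) K) : K := coeffM a (sig tle a)

/-- One-step s-reduction of `a` to `b` modulo `G`, witnessed by `g ∈ G` and the
power-product `t`. -/
def RedStepWith (G : Set (Fin m → MvPolynomial (Fin n) K))
    (a b g : Fin m → MvPolynomial (Fin n) K) (t : PP n) : Prop :=
  g ∈ G ∧ bar f g ≠ 0 ∧
    MvPolynomial.coeff (t + lp ple (bar f g)) (bar f a) ≠ 0 ∧
    b = a - monomMul (MvPolynomial.coeff (t + lp ple (bar f g)) (bar f a) / lc ple (bar f g)) t g ∧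
    tle (mulTerm t (sig tle g)) (sig tle a)

/-- The step witnessed by `g` and `t` is regular: `t ⊗ 𝔰(g) ≺_t 𝔰(a)`. -/
def RegularWith (a g : Fin m → MvPolynomial (Fin n) K) (t : PP n) : Prop :=
  strict tle (mulTerm t (sig tle g)) (sig tle a)

/-- The step witnessed by `g` and `t` is top: `t·lp(‾g) = lp(‾a)`. -/
def TopWith (a g : Fin m → MvPolynomial (Fin n) K) (t : PP n) : Prop :=
  t + lp ple (bar f g) = lp ple (bar f a)

/-- `a` s-reduces to `b` modulo `G` in one step. -/
def SigRedStep (G : Set (Fin m → MvPolynomial (Fin n) K))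
    (a b : Fin m → MvPolynomial (Fin n) K) : Prop :=
  ∃ g t, RedStepWith f ple tle G a b g t

/-- `a` regular s-reduces to `b` modulo `G` in one step. -/
def RegRedStep (G : Set (Fin m → MvPolynomial (Fin n) K))
    (a b : Fin m → MvPolynomial (Fin n) K) : Prop :=
  ∃ g t, RedStepWith f ple tle G a b g t ∧ RegularWith tle a g t

/-- `a` regular top s-reduces to `b` modulo `G` in one step. -/
def RegTopRedStep (G : Set (Fin m → MvPolynomial (Fin n) K))
    (a b : Fin m → MvPolynomial (Fin n) K) : Prop :=
  ∃ g t, RedStepWith f ple tle G a b g t ∧ RegularWith tle a g t ∧ TopWith f ple a g t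

/-- `a` is regular s-irreducible modulo `G`. -/
def RegIrred (G : Set (Fin m → MvPolynomial (Fin n) K))
    (a : Fin m → MvPolynomial (Fin n) K) : Prop :=
  ∀ b, ¬ RegRedStep f ple tle G a b

/-- `a` is regular top s-irreducible modulo `G`. -/
def RegTopIrred (G : Set (Fin m → MvPolynomial (Fin n) K))
    (a : Fin m → MvPolynomial (Fin n) K) : Prop :=
  ∀ b, ¬ RegTopRedStep f ple tle G a b

/-- `a` s-reduces to zero modulo `G`. -/
def SigRedZero (G : Set (Fin m → MvPolynomial (Fin n) K))
    (a : Fin m → MvPolynomial (Fin n) K) : Prop :=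
  ∃ b, Relation.ReflTransGen (SigRedStep f ple tle G) a b ∧ bar f b = 0

/-- `a` regular s-reduces to zero modulo `G`. -/
def RegRedZero (G : Set (Fin m → MvPolynomial (Fin n) K))
    (a : Fin m → MvPolynomial (Fin n) K) : Prop :=
  ∃ b, Relation.ReflTransGen (RegRedStep f ple tle G) a b ∧ bar f b = 0

/-- `G` is a signature Gröbner basis in the term `u`. -/
def IsSigGBIn (G : Set (Fin m → MvPolynomial (Fin n) K)) (u : Term n m) : Prop :=
  ∀ a : Fin m → MvPolynomial (Fin n) K, a ≠ 0 → sig tle a = u → SigRedZero f ple tle G a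

/-- `G` is a signature Gröbner basis up to the term `u`. -/
def IsSigGBUpto (G : Set (Fin m → MvPolynomial (Fin n) K)) (u : Term n m) : Prop :=
  ∀ v, strict tle v u → IsSigGBIn f ple tle G v

/-- `u` is a syzygy signature. -/
def IsSyzSig (u : Term n m) : Prop :=
  ∃ a : Fin m → MvPolynomial (Fin n) K, a ≠ 0 ∧ sig tle a = u ∧ bar f a = 0

/-- The sig-poly-pair `(𝔰(a), ‾a)` of a module element `a`. -/
noncomputable def sppOf (a : Fin m → MvPolynomial (Fin n) K) :
    Term n m × MvPolynomial (Fin n) K :=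
  (sig tle a, bar f a)

/-- `x` is a sig-poly-pair. -/
def IsSPP (x : Term n m × MvPolynomial (Fin n) K) : Prop :=
  ∃ a : Fin m → MvPolynomial (Fin n) K, a ≠ 0 ∧ sppOf f tle a = x

/-- `ro` is a rewrite order. -/
def IsRewriteOrder
    (ro : Term n m × MvPolynomial (Fin n) K → Term n m × MvPolynomial (Fin n) K → Prop) :
    Prop :=
  (∀ x, IsSPP f tle x → ro x x) ∧
  (∀ x y z, IsSPP f tle x → IsSPP f tle y → IsSPP f tle z → ro x y → ro y z → ro x z) ∧
  (∀ x y, IsSPP f tle x → IsSPP f tle y → (ro x y ∨ ro y x)) ∧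
  (∀ x y, IsSPP f tle x → IsSPP f tle y → ro x y → ro y x → x.1 = y.1) ∧
  (∀ (G : Set (Fin m → MvPolynomial (Fin n) K)) (a b : Fin m → MvPolynomial (Fin n) K),
    IsSigGBUpto f ple tle G (sig tle b) → a ∈ G → b ∈ G → a ≠ 0 → b ≠ 0 →
    termDvd (sig tle a) (sig tle b) → RegTopIrred f ple tle G b →
    ro (sppOf f tle a) (sppOf f tle b))

/-- `a` is a canonical rewriter in the term `u` w.r.t. `G` (for the rewrite order `ro`). -/
def IsCanonRewriter
    (ro : Term n m × MvPolynomial (Fin n) K → Term n m × MvPolynomial (Fin n) K → Prop)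
    (G : Set (Fin m → MvPolynomial (Fin n) K)) (u : Term n m)
    (a : Fin m → MvPolynomial (Fin n) K) : Prop :=
  a ∈ G ∧ a ≠ 0 ∧ termDvd (sig tle a) u ∧
    ∀ g ∈ G, g ≠ 0 → termDvd (sig tle g) u → ro (sppOf f tle g) (sppOf f tle a)

/-- `G` is a rewrite basis in the term `u` (for the rewrite order `ro`). -/
def IsRBIn
    (ro : Term n m × MvPolynomial (Fin n) K → Term n m × MvPolynomial (Fin n) K → Prop)
    (G : Set (Fin m → MvPolynomial (Fin n) K)) (u : Term n m) : Prop :=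
  IsSyzSig f tle u ∨
    ∃ g, IsCanonRewriter f tle ro G u g ∧
      RegTopIrred f ple tle G (monomMul (1 : K) (u.1 - (sig tle g).1) g)

/-- `G` is a rewrite basis up to the term `u` (for the rewrite order `ro`). -/
def IsRBUpto
    (ro : Term n m × MvPolynomial (Fin n) K → Term n m × MvPolynomial (Fin n) K → Prop)
    (G : Set (Fin m → MvPolynomial (Fin n) K)) (u : Term n m) : Prop :=
  ∀ v, strict tle v u → IsRBIn f ple tle ro G v

/-- The S-pair of two module elements. -/
noncomputable def spair (a b : Fin m → MvPolynomial (Fin n) K) :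
    Fin m → MvPolynomial (Fin n) K :=
  monomMul ((1 : K) / lc ple (bar f a))
      (lcmPP (lp ple (bar f a)) (lp ple (bar f b)) - lp ple (bar f a)) a -
    monomMul ((1 : K) / lc ple (bar f b))
      (lcmPP (lp ple (bar f a)) (lp ple (bar f b)) - lp ple (bar f b)) b

/-- `a` and `b` give rise to a regular S-pair. -/
def IsRegularSPair (a b : Fin m → MvPolynomial (Fin n) K) : Prop :=
  bar f a ≠ 0 ∧ bar f b ≠ 0 ∧
    mulTerm (lcmPP (lp ple (bar f a)) (lp ple (bar f b)) - lp ple (bar f a)) (sig tle a) ≠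
      mulTerm (lcmPP (lp ple (bar f a)) (lp ple (bar f b)) - lp ple (bar f b)) (sig tle b)

/-- `B` is a Gröbner basis of the ideal `I` w.r.t. `ple`. -/
def IsGroebnerBasis (B : Set (MvPolynomial (Fin n) K)) (I : Ideal (MvPolynomial (Fin n) K)) :
    Prop :=
  (∀ b ∈ B, b ∈ I) ∧ Ideal.span B = I ∧
    ∀ p ∈ I, p ≠ 0 → ∃ b ∈ B, b ≠ 0 ∧ ∃ t : PP n, lp ple p = t + lp ple b

/-- One step of ordinary polynomial reduction of `p` to `q` modulo `B`. -/
def PolyRedStep (B : Set (MvPolynomial (Fin n) K)) (p q : MvPolynomial (Fin n) K) : Prop :=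
  ∃ r ∈ B, r ≠ 0 ∧ ∃ t : PP n, MvPolynomial.coeff (t + lp ple r) p ≠ 0 ∧
    q = p - MvPolynomial.monomial t (MvPolynomial.coeff (t + lp ple r) p / lc ple r) * r

set_option linter.unusedSectionVars false

theorem bar_sub_monomMul (c : K) (t : PP n) (a g : Fin m → MvPolynomial (Fin n) K) :
    bar f (a - monomMul c t g) = bar f a - MvPolynomial.monomial t c * bar f g := by
  simp [bar, monomMul, sub_mul, Finset.sum_sub_distrib, Finset.mul_sum, mul_assoc]

variable {f ple tle}

theorem mem_span_range_iff_exists_bar {p : MvPolynomial (Fin n) K} :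
    p ∈ Ideal.span (Set.range f) ↔ ∃ a, bar f a = p := by
  simp only [Ideal.mem_span_range_iff_exists_fun, bar]

theorem OrdersOK.exists_max (hord : OrdersOK ple tle) {S : Finset (PP n)} (hS : S.Nonempty) :
    ∃ t ∈ S, ∀ s ∈ S, ple s t := by
  induction hS using Finset.Nonempty.cons_induction with
  | singleton a => exact ⟨a, by simp, by simpa using hord.ple_refl a⟩
  | cons a S ha _ ih =>
    obtain ⟨t, ht, hmax⟩ := ih
    rcases hord.ple_total a t with h | h
    · exact ⟨t, by simp [ht], by simpa [h] using hmax⟩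
    · exact ⟨a, by simp, by
        simpa [hord.ple_refl a] using fun s hs => hord.ple_trans s t a (hmax s hs) h⟩

theorem OrdersOK.lp_spec (hord : OrdersOK ple tle) {p : MvPolynomial (Fin n) K} (hp : p ≠ 0) :
    p.coeff (lp ple p) ≠ 0 ∧ ∀ s, p.coeff s ≠ 0 → ple s (lp ple p) := by
  have h : ∃ t, p.coeff t ≠ 0 ∧ ∀ s, p.coeff s ≠ 0 → ple s t := by
    simpa using hord.exists_max (MvPolynomial.support_nonempty.2 hp)
  rw [lp, dif_pos h]
  exact h.choose_spec

theorem OrdersOK.lp_eq (hord : OrdersOK ple tle) {p : MvPolynomial (Fin n) K} {t : PP n}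
    (ht : p.coeff t ≠ 0) (hmax : ∀ s, p.coeff s ≠ 0 → ple s t) : lp ple p = t := by
  have hp : p ≠ 0 := by
    rintro rfl
    simp at ht
  have h := hord.lp_spec hp
  exact hord.ple_antisymm _ _ (hmax _ h.1) (h.2 _ ht)

theorem OrdersOK.ple_of_coeff_monomial_mul_ne_zero (hord : OrdersOK ple tle)
    {q : MvPolynomial (Fin n) K} {t s : PP n} {c : K}
    (hs : (MvPolynomial.monomial t c * q).coeff s ≠ 0) : ple s (t + lp ple q) := by
  rw [MvPolynomial.coeff_monomial_mul'] at hs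
  split_ifs at hs with hts
  · have hcoeff := right_ne_zero_of_mul hs
    have hq : q ≠ 0 := by
      rintro rfl
      simp at hcoeff
    simpa [add_tsub_cancel_of_le hts] using
      hord.ple_mul t _ _ ((hord.lp_spec hq).2 _ hcoeff)
  · exact absurd rfl hs

/-- Subtracting a multiple of `q` whose leading power-product lies in the support of `p` but
differs from `lp p` leaves the leading power-product of `p` unchanged. -/
theorem OrdersOK.lp_sub_monomial_mul (hord : OrdersOK ple tle)
    {p q : MvPolynomial (Fin n) K} {t : PP n} (c : K)
    (ht : p.coeff (t + lp ple q) ≠ 0) (hne : t + lp ple q ≠ lp ple p) :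
    p - MvPolynomial.monomial t c * q ≠ 0 ∧
      lp ple (p - MvPolynomial.monomial t c * q) = lp ple p := by
  have hp : p ≠ 0 := by
    rintro rfl
    simp at ht
  obtain ⟨hlc, hmax⟩ := hord.lp_spec hp
  have hle := hmax _ ht
  have hzero : (MvPolynomial.monomial t c * q).coeff (lp ple p) = 0 := by
    by_contra h
    exact hne (hord.ple_antisymm _ _ hle (hord.ple_of_coeff_monomial_mul_ne_zero h))
  have hcoeff : (p - MvPolynomial.monomial t c * q).coeff (lp ple p) ≠ 0 := by
    rwa [MvPolynomial.coeff_sub, hzero, sub_zero]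
  refine ⟨fun h => hcoeff (by rw [h, MvPolynomial.coeff_zero]), hord.lp_eq hcoeff fun s hs => ?_⟩
  by_cases hps : p.coeff s = 0
  · refine hord.ple_trans _ _ _ (hord.ple_of_coeff_monomial_mul_ne_zero (c := c) fun h => hs ?_) hle
    rw [MvPolynomial.coeff_sub, hps, h, sub_zero]
  · exact hmax s hps

theorem SigRedZero.bar_mem_span {G : Set (Fin m → MvPolynomial (Fin n) K)}
    {a : Fin m → MvPolynomial (Fin n) K} (h : SigRedZero f ple tle G a) :
    bar f a ∈ Ideal.span (bar f '' G) := by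
  obtain ⟨b, hab, hb⟩ := h
  induction hab using Relation.ReflTransGen.head_induction_on with
  | refl => simp [hb]
  | head hstep _ ih =>
    obtain ⟨g, t, hg, -, -, rfl, -⟩ := hstep
    rw [bar_sub_monomMul] at ih
    have hmem : bar f g ∈ Ideal.span (bar f '' G) := Ideal.subset_span ⟨g, hg, rfl⟩
    exact (Submodule.sub_mem_iff_left _ (Ideal.mul_mem_left _ _ hmem)).1 ih

theorem SigRedZero.exists_lp_dvd (hord : OrdersOK ple tle)
    {G : Set (Fin m → MvPolynomial (Fin n) K)} {a : Fin m → MvPolynomial (Fin n) K}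
    (h : SigRedZero f ple tle G a) (ha : bar f a ≠ 0) :
    ∃ g ∈ G, bar f g ≠ 0 ∧ ∃ t : PP n, lp ple (bar f a) = t + lp ple (bar f g) := by
  obtain ⟨b, hab, hb⟩ := h
  induction hab using Relation.ReflTransGen.head_induction_on with
  | refl => exact absurd hb ha
  | @head a _ hstep _ ih =>
    obtain ⟨g, t, hg, hg0, hcoeff, rfl, -⟩ := hstep
    by_cases htop : t + lp ple (bar f g) = lp ple (bar f a)
    · exact ⟨g, hg, hg0, t, htop.symm⟩
    · rw [bar_sub_monomMul] at ih
      obtain ⟨hne, hlp⟩ := hord.lp_sub_monomial_mul _ hcoeff htop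
      exact hlp ▸ ih hne

variable (f ple tle)

/-- if `G` is a signature Gröbner basis, then `‾G` is a Gröbner basis
of the ideal generated by `f_1, …, f_m`. -/
theorem sigGB_is_groebner (hord : OrdersOK ple tle)
    (G : Set (Fin m → MvPolynomial (Fin n) K))
    (hG : ∀ u : Term n m, IsSigGBIn f ple tle G u) :
    IsGroebnerBasis ple (bar f '' G) (Ideal.span (Set.range f)) := by
  have hred : ∀ a, bar f a ≠ 0 → SigRedZero f ple tle G a := fun a ha =>
    hG _ a (fun h => ha (by simp [h, bar])) rfl
  have hmem : ∀ b ∈ bar f '' G, b ∈ Ideal.span (Set.range f) := by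
    rintro _ ⟨g, -, rfl⟩
    exact mem_span_range_iff_exists_bar.2 ⟨g, rfl⟩
  refine ⟨hmem, le_antisymm (Ideal.span_le.2 hmem) fun p hp => ?_, fun p hp hp0 => ?_⟩
  · obtain ⟨a, rfl⟩ := mem_span_range_iff_exists_bar.1 hp
    by_cases ha : bar f a = 0
    · simp [ha]
    · exact (hred a ha).bar_mem_span
  · obtain ⟨a, rfl⟩ := mem_span_range_iff_exists_bar.1 hp
    obtain ⟨g, hg, hg0, hdvd⟩ := (hred a hp0).exists_lp_dvd hord hp0
    exact ⟨_, ⟨g, hg, rfl⟩, hg0, hdvd⟩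

end

end SigGB
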